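/- arXiv:1405.6521 — 2 statements merged into one kernel-verified Lean document; each statement's English description precedes it below -/
import Mathlib

section
/- In a twisted group algebra A = (K[(Z/2)^n], f) with basis {u_x} and product u_x · u_y = (−1)^{f(x,y)} u_{x+y}, suppose f admits a generating function α (so f(x,x)=α(x), f(x,y)+f(y,x)=α(x+y)+α(x)+α(y), and δf(x,y,z) is the third polarization of α). Then A is graded-alternative: u_x · (u_x · u_y) = (u_x · u_x) · u_y for all x, y ∈ (Z/2)^n. -/
/-- in the twisted group algebra `(K[(ℤ/2)^n], f)` (realized as
functions `(ℤ/2)^n → K` with the twisted convolution product, `u_x` being the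
indicator of `x`), if `f` admits a generating function `α`, then the algebra
is graded-alternative on basis elements: `u_x · (u_x · u_y) = (u_x · u_x) · u_y`. -/
theorem stmt_13 (K : Type*) [Field K] (n : ℕ)
    (f : (Fin n → ZMod 2) → (Fin n → ZMod 2) → ZMod 2)
    (α : (Fin n → ZMod 2) → ZMod 2)
    (h1 : ∀ x, f x x = α x)
    (h2 : ∀ x y, f x y + f y x = α (x + y) + α x + α y)
    (h3 : ∀ x y z,
      f x y + f x (y + z) + f (x + y) z + f y z
        = α (x + y + z) + α (x + y) + α (x + z) + α (y + z) + α x + α y + α z) :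
    let mul : ((Fin n → ZMod 2) → K) → ((Fin n → ZMod 2) → K)
        → ((Fin n → ZMod 2) → K) := fun a b z =>
      ∑ x : Fin n → ZMod 2, (-1 : K) ^ (f x (z + x)).val * a x * b (z + x)
    let u : (Fin n → ZMod 2) → ((Fin n → ZMod 2) → K) := fun x =>
      Pi.single x 1
    ∀ x y : Fin n → ZMod 2, mul (u x) (mul (u x) (u y)) = mul (mul (u x) (u x)) (u y) := by
  intro mul u x y
  have two : ∀ a : Fin n → ZMod 2, a + a = 0 := fun a => by
    funext i; exact CharTwo.add_self_eq_zero (a i)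
  have key : ∀ (x y : Fin n → ZMod 2) (c d : K),
      mul (Pi.single x c) (Pi.single y d)
        = Pi.single (x + y) ((-1 : K) ^ (f x y).val * c * d) := by
    intro x y c d
    funext z
    change ∑ w : Fin n → ZMod 2, (-1 : K) ^ (f w (z + w)).val
      * (Pi.single x c : (Fin n → ZMod 2) → K) w
      * (Pi.single y d : (Fin n → ZMod 2) → K) (z + w) = _
    rw [Finset.sum_eq_single x]
    · by_cases hz : z = x + y
      · have : z + x = y := by
          rw [hz, add_right_comm, two, zero_add]
        rw [this, hz]; simp
      · have : z + x ≠ y := by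
          intro h
          apply hz
          rw [← h, add_comm z x, ← add_assoc, two, zero_add]
        simp [Pi.single_apply, hz, this]
    · intro b _ hb
      simp [Pi.single_apply, hb]
    · simp
  change mul (Pi.single x 1) (mul (Pi.single x 1) (Pi.single y 1))
    = mul (mul (Pi.single x 1) (Pi.single x 1)) (Pi.single y 1)
  rw [key, key, key, key, ← add_assoc]
  congr 1
  have h0 := h3 0 0 0
  have h := h3 x x y
  simp only [two, zero_add, add_zero] at h0 h
  rw [two] 
  generalize f x x = p at *
  generalize f x (x + y) = q at *
  generalize f 0 y = r at *
  generalize f x y = s at *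
  generalize f 0 0 = t at *
  generalize α 0 = a0 at *
  generalize α x = a1 at *
  generalize α y = a2 at *
  generalize α (x + y) = a3 at *
  have e : ∀ t a0 p q r s a1 a2 a3 : ZMod 2,
      t + t + t + t = a0 + a0 + a0 + a0 + a0 + a0 + a0 →
      p + q + r + s = a2 + a0 + a3 + a3 + a1 + a1 + a2 → q + s = p + r := by
    decide
  have e2 := e t a0 p q r s a1 a2 a3 h0 h
  simp only [mul_one]
  have sgn : ∀ a b : ZMod 2, (-1 : K) ^ (a + b).val = (-1) ^ a.val * (-1) ^ b.val := by
    intro a b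
    rw [ZMod.val_add, ← neg_one_pow_eq_pow_mod_two, pow_add]
  rw [← sgn, ← sgn, e2, add_comm]
end

section
/- The cubic form α_{0,3}(x) = x_1x_2x_3 + x_1x_2 + x_1x_3 + x_2x_3 + x_1 + x_2 + x_3 on (Z/2)^3 is not equivalent to the form α_{1,2}(x) = x_1x_2x_3 + x_1x_2 + x_1x_3 + x_2x_3 + x_2 + x_3: there is no G ∈ GL_3(Z/2) with α_{0,3}(Gx) = α_{1,2}(x) for all x. -/
/-- the cubic forms
`α_{0,3}(x) = x_1x_2x_3 + x_1x_2 + x_1x_3 + x_2x_3 + x_1 + x_2 + x_3` and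
`α_{1,2}(x) = x_1x_2x_3 + x_1x_2 + x_1x_3 + x_2x_3 + x_2 + x_3`
on `(ℤ/2)^3` are not equivalent: no invertible ℤ/2-linear change of
coordinates `G` satisfies `α_{0,3}(Gx) = α_{1,2}(x)` for all `x`. -/
theorem stmt_17 :
    let α03 : (Fin 3 → ZMod 2) → ZMod 2 := fun x =>
      x 0 * x 1 * x 2 + x 0 * x 1 + x 0 * x 2 + x 1 * x 2 + x 0 + x 1 + x 2
    let α12 : (Fin 3 → ZMod 2) → ZMod 2 := fun x =>
      x 0 * x 1 * x 2 + x 0 * x 1 + x 0 * x 2 + x 1 * x 2 + x 1 + x 2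
    ¬ ∃ G : (Fin 3 → ZMod 2) ≃ₗ[ZMod 2] (Fin 3 → ZMod 2),
        ∀ x, α03 (G x) = α12 x := by
  intro α03 α12
  rintro ⟨G, hG⟩
  have key : ∀ a b c : ZMod 2,
      a * b * c + a * b + a * c + b * c + a + b + c = 0 → a = 0 ∧ b = 0 ∧ c = 0 := by
    decide
  have h : α03 (G ![1, 0, 0]) = 0 := by
    rw [hG]
    simp [α12]
  obtain ⟨h0, h1, h2⟩ := key _ _ _ h
  have hz : G ![1, 0, 0] = 0 := by
    funext i
    fin_cases i
    · exact h0
    · exact h1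
    · exact h2
  have hx : (![1, 0, 0] : Fin 3 → ZMod 2) = 0 := G.map_eq_zero_iff.mp hz
  have h10 : (1 : ZMod 2) = 0 := congrFun hx 0
  exact absurd h10 (by decide)
end
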